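/- Let D ⊆ ℝⁿ be a bounded measurable set with |D| > 0 and let q̈ : D×D → ℝ be measurable and antisymmetric with N := ∫_D (∫_D q̈(x,x')² dx')^{1/2} dx ∈ (0,∞). Consider the harmonic-average resistive energy Î(κ₀; q̈) := (1/2)∫_D ∫_D (1/2)(κ₀(x)⁻¹ + κ₀(x')⁻¹) q̈(x,x')² dx' dx. Then: (i) for every measurable κ₀ : D → [0,∞) with ∫_D κ₀ dx ≤ |D| one has Î(κ₀; q̈) ≥ N²/(2|D|); (ii) the function κ̂₀(x) := (|D|/N)(∫_D q̈(x,x')² dx')^{1/2} is admissible (measurable, nonnegative, ∫_D κ̂₀ dx = |D|) and achieves equality: Î(κ̂₀; q̈) = N²/(2|D|). -/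

import Mathlib

/-!
Write `g x = ∫_D q(x,x')² dx'`, so that `N = ∫_D √g`. Since `q²` is symmetric almost everywhere,
Tonelli's theorem makes the two halves of the harmonic average contribute equally, and the energy
collapses to the single integral `Î(κ; q) = ½ ∫_D g / κ` (`lintegral_symm_average`).

The lower bound is then the Cauchy–Schwarz inequality applied to `√g = √(g / κ) · √κ`
(`sq_lintegral_sqrt_le`): `N² ≤ (∫ g / κ) (∫ κ) ≤ (∫ g / κ) |D|`. Equality holds for `κ = c √g` with
`c = |D| / N`, because then `g / κ = c⁻¹ √g` wherever `g` is finite, hence almost everywhere.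
All integrals are taken in `[0,∞]`, where `0 * ∞ = 0` encodes the convention at `κ = 0`.
-/

open MeasureTheory ENNReal

noncomputable section

/-- The mixed `L^{1,2}` norm of a two-point function on `D × D`, with values in `[0,∞]`. -/
def N12 {n : ℕ} (D : Set (EuclideanSpace ℝ (Fin n)))
    (q : EuclideanSpace ℝ (Fin n) → EuclideanSpace ℝ (Fin n) → ℝ) : ℝ≥0∞ :=
  ∫⁻ x in D, (∫⁻ x' in D, ENNReal.ofReal (q x x' ^ 2)) ^ (1/2 : ℝ)

/-- The harmonic-average resistive energy
`Î(κ₀;q̈) = (1/2)∬_D (1/2)(κ₀(x)⁻¹ + κ₀(x')⁻¹) q̈(x,x')² dx' dx`, with values in `[0,∞]`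
and the convention `0 ⬝ ∞ = 0`. -/
def IhatH {n : ℕ} (D : Set (EuclideanSpace ℝ (Fin n)))
    (κ : EuclideanSpace ℝ (Fin n) → ℝ)
    (q : EuclideanSpace ℝ (Fin n) → EuclideanSpace ℝ (Fin n) → ℝ) : ℝ≥0∞ :=
  2⁻¹ * ∫⁻ x in D, ∫⁻ x' in D,
    ENNReal.ofReal (q x x' ^ 2) *
      (2⁻¹ * ((ENNReal.ofReal (κ x))⁻¹ + (ENNReal.ofReal (κ x'))⁻¹))

/-- The two halves of the harmonic average contribute equally when the kernel is symmetric
almost everywhere. Here `f` plays the role of `κ⁻¹`. -/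
lemma lintegral_symm_average {α : Type*} [MeasurableSpace α] (μ : Measure α) [SFinite μ]
    (Q : α → α → ℝ≥0∞) (hQ : Measurable (Function.uncurry Q))
    (hsymm : ∀ᵐ p ∂(μ.prod μ), Q p.1 p.2 = Q p.2 p.1)
    (f : α → ℝ≥0∞) (hf : Measurable f) :
    ∫⁻ x, ∫⁻ y, Q x y * (2⁻¹ * (f x + f y)) ∂μ ∂μ = ∫⁻ x, (∫⁻ y, Q x y ∂μ) * f x ∂μ := by
  have hQ' : Measurable fun p : α × α => Q p.1 p.2 := hQ
  have hA : Measurable fun p : α × α => Q p.1 p.2 * f p.1 := by fun_prop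
  have hB : Measurable fun p : α × α => Q p.1 p.2 * f p.2 := by fun_prop
  have hswap : ∫⁻ p, Q p.1 p.2 * f p.2 ∂(μ.prod μ) = ∫⁻ p, Q p.1 p.2 * f p.1 ∂(μ.prod μ) := by
    rw [← lintegral_prod_swap]
    refine lintegral_congr_ae ?_
    filter_upwards [hsymm] with p hp
    simp only [Prod.fst_swap, Prod.snd_swap, hp]
  have hsingle : ∫⁻ p, Q p.1 p.2 * f p.1 ∂(μ.prod μ) = ∫⁻ x, (∫⁻ y, Q x y ∂μ) * f x ∂μ := by
    rw [lintegral_prod _ hA.aemeasurable]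
    refine lintegral_congr fun x => ?_
    have hx : Measurable fun y => Q x y := hQ'.comp measurable_prodMk_left
    exact lintegral_mul_const (f x) hx
  have hC : Measurable fun p : α × α => Q p.1 p.2 * (2⁻¹ * (f p.1 + f p.2)) := by fun_prop
  calc ∫⁻ x, ∫⁻ y, Q x y * (2⁻¹ * (f x + f y)) ∂μ ∂μ
      = ∫⁻ p, Q p.1 p.2 * (2⁻¹ * (f p.1 + f p.2)) ∂(μ.prod μ) :=
        (lintegral_prod _ hC.aemeasurable).symm
    _ = ∫⁻ p, 2⁻¹ * (Q p.1 p.2 * f p.1 + Q p.1 p.2 * f p.2) ∂(μ.prod μ) :=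
        lintegral_congr fun p => by ring
    _ = 2⁻¹ * (∫⁻ p, Q p.1 p.2 * f p.1 ∂(μ.prod μ) + ∫⁻ p, Q p.1 p.2 * f p.2 ∂(μ.prod μ)) := by
        rw [← lintegral_add_left hA]
        exact lintegral_const_mul _ (hA.add hB)
    _ = ∫⁻ x, (∫⁻ y, Q x y ∂μ) * f x ∂μ := by
        rw [hswap, hsingle, ← two_mul, ← mul_assoc,
          ENNReal.inv_mul_cancel two_ne_zero ENNReal.ofNat_ne_top, one_mul]

/-- Cauchy–Schwarz for `√g = √(g / k) · √k`. -/
lemma sq_lintegral_sqrt_le {α : Type*} [MeasurableSpace α] (μ : Measure α)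
    (g k : α → ℝ≥0∞) (hg : Measurable g) (hk : Measurable k) (hktop : ∀ x, k x ≠ ⊤)
    (hk0 : ∫⁻ x, k x ∂μ ≠ 0) :
    (∫⁻ x, g x ^ (1/2 : ℝ) ∂μ) ^ 2 ≤ (∫⁻ x, g x * (k x)⁻¹ ∂μ) * ∫⁻ x, k x ∂μ := by
  by_cases hI : ∫⁻ x, g x * (k x)⁻¹ ∂μ = ⊤
  · rw [hI, ENNReal.top_mul hk0]
    exact le_top
  have hm : Measurable fun x => g x * (k x)⁻¹ := by fun_prop
  -- Where `g / k` is finite, `k = 0` forces `g = 0`, so the factorization is valid.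
  have hle : ∀ᵐ x ∂μ, g x ^ (1/2 : ℝ) = (g x * (k x)⁻¹) ^ (1/2 : ℝ) * k x ^ (1/2 : ℝ) := by
    filter_upwards [ae_lt_top hm hI] with x hx
    rw [← ENNReal.mul_rpow_of_nonneg _ _ (by norm_num : (0:ℝ) ≤ 1/2)]
    congr 1
    by_cases h0 : k x = 0
    · have : g x = 0 := by
        by_contra h
        simp [h0, ENNReal.mul_top h] at hx
      simp [this]
    · rw [mul_assoc, ENNReal.inv_mul_cancel h0 (hktop x), mul_one]
  have hsq : ∀ a : ℝ≥0∞, (a ^ (1/2 : ℝ)) ^ (2 : ℝ) = a := fun a => by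
    rw [← ENNReal.rpow_mul]; norm_num
  have hH := ENNReal.lintegral_mul_le_Lp_mul_Lq μ Real.HolderConjugate.two_two
    (hm.pow_const (1/2 : ℝ)).aemeasurable (hk.pow_const (1/2 : ℝ)).aemeasurable
  simp only [Pi.mul_apply, hsq] at hH
  rw [lintegral_congr_ae hle]
  calc _ ≤ _ := pow_le_pow_left' hH 2
    _ = _ := by
      rw [mul_pow, ← ENNReal.rpow_two, ← ENNReal.rpow_two, hsq, hsq]

/-- The energy as a single integral against the inverse conductivity. -/
lemma IhatH_eq {n : ℕ} (D : Set (EuclideanSpace ℝ (Fin n)))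
    (q : EuclideanSpace ℝ (Fin n) → EuclideanSpace ℝ (Fin n) → ℝ)
    (hqm : Measurable (Function.uncurry q))
    (hqa : ∀ᵐ p ∂((volume.restrict D).prod (volume.restrict D)), q p.1 p.2 = -q p.2 p.1)
    (κ : EuclideanSpace ℝ (Fin n) → ℝ) (hκ : Measurable κ) :
    IhatH D κ q = 2⁻¹ * ∫⁻ x in D,
      (∫⁻ x' in D, ENNReal.ofReal (q x x' ^ 2)) * (ENNReal.ofReal (κ x))⁻¹ := by
  unfold IhatH
  congr 1
  refine lintegral_symm_average (volume.restrict D) (fun x x' => ENNReal.ofReal (q x x' ^ 2))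
    (hqm.pow_const 2).ennreal_ofReal ?_ (fun x => (ENNReal.ofReal (κ x))⁻¹)
    hκ.ennreal_ofReal.inv
  filter_upwards [hqa] with p hp
  rw [hp, neg_sq]

/-- Vanishing-material optimal conductivity for the nonlocal problem with
harmonic averaging: the lower bound `Î(κ₀;q̈) ≥ N²/(2|D|)` for all admissible conductivities
and its attainment by `κ̂₀(x) = (|D|/N) (∫_D q̈(x,x')² dx')^{1/2}`. -/
theorem stmt7 {n : ℕ} (D : Set (EuclideanSpace ℝ (Fin n)))
    (hDm : MeasurableSet D) (hDb : Bornology.IsBounded D) (hDpos : 0 < volume D)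
    (q : EuclideanSpace ℝ (Fin n) → EuclideanSpace ℝ (Fin n) → ℝ)
    (hqm : Measurable (Function.uncurry q))
    (hqa : ∀ᵐ p ∂((volume.restrict D).prod (volume.restrict D)),
      q p.1 p.2 = -q p.2 p.1)
    (hNpos : 0 < N12 D q) (hNfin : N12 D q < ⊤) :
    (∀ κ : EuclideanSpace ℝ (Fin n) → ℝ, Measurable κ → (∀ x, 0 ≤ κ x) →
        (∫⁻ x in D, ENNReal.ofReal (κ x)) ≤ volume D →
        N12 D q ^ 2 / (2 * volume D) ≤ IhatH D κ q) ∧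
    (Measurable (fun x => (volume D).toReal / (N12 D q).toReal *
        ((∫⁻ x' in D, ENNReal.ofReal (q x x' ^ 2)) ^ (1/2 : ℝ)).toReal) ∧
      (∀ x, 0 ≤ (volume D).toReal / (N12 D q).toReal *
        ((∫⁻ x' in D, ENNReal.ofReal (q x x' ^ 2)) ^ (1/2 : ℝ)).toReal) ∧
      (∫⁻ x in D, ENNReal.ofReal ((volume D).toReal / (N12 D q).toReal *
          ((∫⁻ x' in D, ENNReal.ofReal (q x x' ^ 2)) ^ (1/2 : ℝ)).toReal)) = volume D ∧
      IhatH D (fun x => (volume D).toReal / (N12 D q).toReal *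
          ((∫⁻ x' in D, ENNReal.ofReal (q x x' ^ 2)) ^ (1/2 : ℝ)).toReal) q =
        N12 D q ^ 2 / (2 * volume D)) := by
  have hVtop : volume D ≠ ⊤ := hDb.measure_lt_top.ne
  have hV0 : volume D ≠ 0 := hDpos.ne'
  set N := N12 D q with hN
  set g : EuclideanSpace ℝ (Fin n) → ℝ≥0∞ :=
    fun x => ∫⁻ x' in D, ENNReal.ofReal (q x x' ^ 2) with hg
  have hgm : Measurable g :=
    Measurable.lintegral_prod_right' (f := fun p : _ × _ => ENNReal.ofReal (q p.1 p.2 ^ 2))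
      (hqm.pow_const 2).ennreal_ofReal
  have hsm : Measurable fun x => g x ^ (1/2 : ℝ) := hgm.pow_const _
  have hNg : N = ∫⁻ x in D, g x ^ (1/2 : ℝ) := rfl
  have hN0 : N ≠ 0 := hNpos.ne'
  have hNtop : N ≠ ⊤ := hNfin.ne
  have hdiv : ∀ a : ℝ≥0∞, a / (2 * volume D) = 2⁻¹ * (a / volume D) := fun a => by
    rw [div_eq_mul_inv, ENNReal.mul_inv (Or.inl two_ne_zero) (Or.inl ENNReal.ofNat_ne_top),
      div_eq_mul_inv]
    ring
  have hκm : Measurable (fun x => (volume D).toReal / N.toReal * (g x ^ (1/2 : ℝ)).toReal) :=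
    hsm.ennreal_toReal.const_mul _
  have hsfin : ∀ᵐ x ∂(volume.restrict D), g x ^ (1/2 : ℝ) < ⊤ :=
    ae_lt_top hsm (hNg ▸ hNtop)
  have hc0 : volume D / N ≠ 0 := ENNReal.div_ne_zero.2 ⟨hV0, hNtop⟩
  have hctop : volume D / N ≠ ⊤ := ENNReal.div_ne_top hVtop hN0
  -- Off the null set where `g = ∞`, the real-valued optimal conductivity is `(|D| / N) √g`.
  have hκ : ∀ᵐ x ∂(volume.restrict D),
      ENNReal.ofReal ((volume D).toReal / N.toReal * (g x ^ (1/2 : ℝ)).toReal) =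
        volume D / N * g x ^ (1/2 : ℝ) := by
    filter_upwards [hsfin] with x hx
    rw [← ENNReal.toReal_div, ← ENNReal.toReal_mul,
      ENNReal.ofReal_toReal (ENNReal.mul_ne_top hctop hx.ne)]
  refine ⟨fun κ hκm hκ0 hκle => ?_, hκm, fun x => by positivity, ?_, ?_⟩
  · rw [IhatH_eq D q hqm hqa κ hκm, hdiv]
    gcongr
    by_cases hk0 : ∫⁻ x in D, ENNReal.ofReal (κ x) = 0
    -- If `κ` vanishes almost everywhere, the energy is infinite since `g` does not.
    · have hz := (lintegral_eq_zero_iff hκm.ennreal_ofReal).1 hk0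
      have : ∫⁻ x in D, g x * (ENNReal.ofReal (κ x))⁻¹ = ⊤ := by
        by_contra hI
        refine hN0 ?_
        rw [hNg, lintegral_eq_zero_iff hsm]
        filter_upwards [hz, ae_lt_top (hgm.mul hκm.ennreal_ofReal.inv) hI] with x hx hx'
        by_contra h
        have hgx : g x ≠ 0 := fun h' => h (by simp [h'])
        simp only [Pi.zero_apply] at hx
        simp [hx, ENNReal.mul_top hgx] at hx'
      exact le_of_le_of_eq le_top this.symm
    · refine ENNReal.div_le_of_le_mul ?_
      calc N ^ 2 ≤ _ := sq_lintegral_sqrt_le (volume.restrict D) g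
            (fun x => ENNReal.ofReal (κ x)) hgm hκm.ennreal_ofReal
            (fun x => ENNReal.ofReal_ne_top) hk0
        _ ≤ _ := by gcongr
  · rw [lintegral_congr_ae hκ, lintegral_const_mul _ hsm, ← hNg,
      ENNReal.div_mul_cancel hN0 hNtop]
  · rw [IhatH_eq D q hqm hqa _ hκm, hdiv]
    congr 1
    have hint : ∀ᵐ x ∂(volume.restrict D),
        g x * (ENNReal.ofReal ((volume D).toReal / N.toReal * (g x ^ (1/2 : ℝ)).toReal))⁻¹ =
          (N / volume D) * g x ^ (1/2 : ℝ) := by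
      filter_upwards [hκ, hsfin] with x hx hfin
      have hgs : g x = g x ^ (1/2 : ℝ) * g x ^ (1/2 : ℝ) := by
        rw [← ENNReal.rpow_add_of_nonneg _ _ (by norm_num) (by norm_num)]
        norm_num
      rw [hx, ENNReal.mul_inv (Or.inl hc0) (Or.inl hctop),
        ENNReal.inv_div (Or.inl hNtop) (Or.inl hN0)]
      by_cases h0 : g x ^ (1/2 : ℝ) = 0
      · have : g x = 0 := by rw [hgs, h0, zero_mul]
        simp [this]
      · nth_rewrite 1 [hgs]
        calc _ = N / volume D * g x ^ (1/2 : ℝ) * (g x ^ (1/2 : ℝ) * (g x ^ (1/2 : ℝ))⁻¹) := by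
              ring
          _ = _ := by rw [ENNReal.mul_inv_cancel h0 hfin.ne, mul_one]
    calc _ = _ := lintegral_congr_ae hint
      _ = N / volume D * N := by rw [lintegral_const_mul _ hsm, ← hNg]
      _ = N ^ 2 / volume D := by rw [div_eq_mul_inv, div_eq_mul_inv]; ring
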